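/- Let C be a spherical fusion category over a commutative ring k and I a representative set of its simple objects. Then for all objects X, Y of C: Σ_{a,b∈I} dim(a)·dim(b)·N^𝟙_{X⊗a⊗Y⊗b} = dim(X)·dim(Y)·dim(C) in k, where the multiplicity N^𝟙_Z = rank_k Hom_C(Z, 𝟙) is regarded in k via the canonical ring map ℤ → k. -/

import Mathlib

open CategoryTheory CategoryTheory.Limits MonoidalCategory

universe v u w

/-- A pivotal category: a monoidal category in which every object is equipped with a dual
object and with evaluation/coevaluation morphisms forming a left duality and a right
duality, such that left and right duals of morphisms coincide, the left and right
monoidal constraints coincide, and the left and right evaluations of the unit coincide. -/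
class PivotalCat (C : Type u) [Category.{v} C] [MonoidalCategory C] where
  dual : C → C
  evl : ∀ X : C, dual X ⊗ X ⟶ 𝟙_ C
  coevl : ∀ X : C, 𝟙_ C ⟶ X ⊗ dual X
  evr : ∀ X : C, X ⊗ dual X ⟶ 𝟙_ C
  coevr : ∀ X : C, 𝟙_ C ⟶ dual X ⊗ X
  left_zigzag₁ : ∀ X : C,
    (λ_ X).inv ≫ (coevl X ▷ X) ≫ (α_ X (dual X) X).hom ≫ (X ◁ evl X) ≫ (ρ_ X).hom = 𝟙 X
  left_zigzag₂ : ∀ X : C,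
    (ρ_ (dual X)).inv ≫ (dual X ◁ coevl X) ≫ (α_ (dual X) X (dual X)).inv ≫
      (evl X ▷ dual X) ≫ (λ_ (dual X)).hom = 𝟙 (dual X)
  right_zigzag₁ : ∀ X : C,
    (ρ_ X).inv ≫ (X ◁ coevr X) ≫ (α_ X (dual X) X).inv ≫ (evr X ▷ X) ≫ (λ_ X).hom = 𝟙 X
  right_zigzag₂ : ∀ X : C,
    (λ_ (dual X)).inv ≫ (coevr X ▷ dual X) ≫ (α_ (dual X) X (dual X)).hom ≫
      (dual X ◁ evr X) ≫ (ρ_ (dual X)).hom = 𝟙 (dual X)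
  ldual_eq_rdual : ∀ {X Y : C} (f : X ⟶ Y),
    (ρ_ (dual Y)).inv ≫ (dual Y ◁ coevl X) ≫ (dual Y ◁ (f ▷ dual X)) ≫
      (α_ (dual Y) Y (dual X)).inv ≫ (evl Y ▷ dual X) ≫ (λ_ (dual X)).hom =
    (λ_ (dual Y)).inv ≫ (coevr X ▷ dual Y) ≫ ((dual X ◁ f) ▷ dual Y) ≫
      (α_ (dual X) Y (dual Y)).hom ≫ (dual X ◁ evr Y) ≫ (ρ_ (dual X)).hom
  constraint_eq : ∀ X Y : C,
    (ρ_ (dual X ⊗ dual Y)).inv ≫ ((dual X ⊗ dual Y) ◁ coevl (Y ⊗ X)) ≫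
      (α_ (dual X) (dual Y) ((Y ⊗ X) ⊗ dual (Y ⊗ X))).hom ≫
      (dual X ◁ (α_ (dual Y) (Y ⊗ X) (dual (Y ⊗ X))).inv) ≫
      (dual X ◁ (((α_ (dual Y) Y X).inv ≫ (evl Y ▷ X) ≫ (λ_ X).hom) ▷ dual (Y ⊗ X))) ≫
      (α_ (dual X) X (dual (Y ⊗ X))).inv ≫ (evl X ▷ dual (Y ⊗ X)) ≫ (λ_ (dual (Y ⊗ X))).hom =
    (λ_ (dual X ⊗ dual Y)).inv ≫ (coevr (Y ⊗ X) ▷ (dual X ⊗ dual Y)) ≫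
      (α_ (dual (Y ⊗ X)) (Y ⊗ X) (dual X ⊗ dual Y)).hom ≫
      (dual (Y ⊗ X) ◁ ((α_ Y X (dual X ⊗ dual Y)).hom ≫ (Y ◁ (α_ X (dual X) (dual Y)).inv) ≫
        (Y ◁ (evr X ▷ dual Y)) ≫ (Y ◁ (λ_ (dual Y)).hom) ≫ evr Y)) ≫
      (ρ_ (dual (Y ⊗ X))).hom
  ev_unit : (ρ_ (dual (𝟙_ C))).inv ≫ evl (𝟙_ C) = (λ_ (dual (𝟙_ C))).inv ≫ evr (𝟙_ C)

namespace PivotalCat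

variable {C : Type u} [Category.{v} C] [MonoidalCategory C] [PivotalCat C]

/-- The (common left = right) dual of a morphism. -/
def pdual {X Y : C} (f : X ⟶ Y) : dual Y ⟶ dual X :=
  (ρ_ (dual Y)).inv ≫ (dual Y ◁ coevl X) ≫ (dual Y ◁ (f ▷ dual X)) ≫
    (α_ (dual Y) Y (dual X)).inv ≫ (evl Y ▷ dual X) ≫ (λ_ (dual X)).hom

/-- The (common left = right) pivotal monoidal constraint `X* ⊗ Y* ⟶ (Y ⊗ X)*`. -/
def mcon (X Y : C) : dual X ⊗ dual Y ⟶ dual (Y ⊗ X) :=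
  (ρ_ (dual X ⊗ dual Y)).inv ≫ ((dual X ⊗ dual Y) ◁ coevl (Y ⊗ X)) ≫
    (α_ (dual X) (dual Y) ((Y ⊗ X) ⊗ dual (Y ⊗ X))).hom ≫
    (dual X ◁ (α_ (dual Y) (Y ⊗ X) (dual (Y ⊗ X))).inv) ≫
    (dual X ◁ (((α_ (dual Y) Y X).inv ≫ (evl Y ▷ X) ≫ (λ_ X).hom) ▷ dual (Y ⊗ X))) ≫
    (α_ (dual X) X (dual (Y ⊗ X))).inv ≫ (evl X ▷ dual (Y ⊗ X)) ≫ (λ_ (dual (Y ⊗ X))).hom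

/-- The left trace of an endomorphism. -/
def trl {X : C} (f : X ⟶ X) : 𝟙_ C ⟶ 𝟙_ C := coevr X ≫ (dual X ◁ f) ≫ evl X

/-- The right trace of an endomorphism. -/
def trr {X : C} (f : X ⟶ X) : 𝟙_ C ⟶ 𝟙_ C := coevl X ≫ (f ▷ dual X) ≫ evr X

/-- The left dimension of an object, as an endomorphism of the unit. -/
def diml (X : C) : 𝟙_ C ⟶ 𝟙_ C := trl (𝟙 X)

/-- The right dimension of an object, as an endomorphism of the unit. -/
def dimr (X : C) : 𝟙_ C ⟶ 𝟙_ C := trr (𝟙 X)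

/-- The permutation map `σ_{X,Y} : Hom(𝟙, X ⊗ Y) → Hom(𝟙, Y ⊗ X)`,
`α ↦ (ev_l X ⊗ id_{Y⊗X}) ∘ (id_{X*} ⊗ α ⊗ id_X) ∘ coev_r X`. -/
def sigmaMap (X Y : C) (a : 𝟙_ C ⟶ X ⊗ Y) : 𝟙_ C ⟶ Y ⊗ X :=
  coevr X ≫ (dual X ◁ (λ_ X).inv) ≫ (dual X ◁ (a ▷ X)) ≫ (dual X ◁ (α_ X Y X).hom) ≫
    (α_ (dual X) X (Y ⊗ X)).inv ≫ (evl X ▷ (Y ⊗ X)) ≫ (λ_ (Y ⊗ X)).hom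

end PivotalCat

/-- A pivotal category is spherical when left and right traces coincide. -/
class SphericalCat (C : Type u) [Category.{v} C] [MonoidalCategory C] [PivotalCat C] : Prop where
  tr_eq : ∀ {X : C} (f : X ⟶ X), PivotalCat.trl f = PivotalCat.trr f
/-- An object `X` of a `k`-linear category is simple if `λ ↦ λ • id_X` is a bijection
`k → End X`. -/
def IsSimpleObj (k : Type w) [CommRing k] {C : Type u} [Category.{v} C]
    [Preadditive C] [CategoryTheory.Linear k C] (X : C) : Prop :=
  Function.Bijective fun a : k => a • 𝟙 X

/-- A monoidal `k`-category: the hom-sets are `k`-modules, composition and the monoidal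
product are `k`-bilinear (all this is encoded in the instance parameters), and
`End(𝟙)` is free of rank one via `λ ↦ λ • id`. -/
class MonoidalKCat (k : Type w) [CommRing k] (C : Type u) [Category.{v} C]
    [Preadditive C] [CategoryTheory.Linear k C] [MonoidalCategory C]
    [MonoidalPreadditive C] [CategoryTheory.MonoidalLinear k C] : Prop where
  unit_free : Function.Bijective fun a : k => a • 𝟙 (𝟙_ C)

/-- The identification `End(𝟙) = k` of a monoidal `k`-category. -/
noncomputable def toScalar (k : Type w) [CommRing k] {C : Type u} [Category.{v} C]
    [Preadditive C] [CategoryTheory.Linear k C] [MonoidalCategory C]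
    [MonoidalPreadditive C] [CategoryTheory.MonoidalLinear k C] [MonoidalKCat k C]
    (f : 𝟙_ C ⟶ 𝟙_ C) : k :=
  (Equiv.ofBijective (fun a : k => a • 𝟙 (𝟙_ C))
    (MonoidalKCat.unit_free (k := k) (C := C))).symm f

/-- The left dimension of an object as an element of `k`. -/
noncomputable def sdiml (k : Type w) [CommRing k] {C : Type u} [Category.{v} C]
    [Preadditive C] [CategoryTheory.Linear k C] [MonoidalCategory C]
    [MonoidalPreadditive C] [CategoryTheory.MonoidalLinear k C] [PivotalCat C]
    [MonoidalKCat k C] (X : C) : k :=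
  toScalar k (PivotalCat.diml X)

/-- The right dimension of an object as an element of `k`. -/
noncomputable def sdimr (k : Type w) [CommRing k] {C : Type u} [Category.{v} C]
    [Preadditive C] [CategoryTheory.Linear k C] [MonoidalCategory C]
    [MonoidalPreadditive C] [CategoryTheory.MonoidalLinear k C] [PivotalCat C]
    [MonoidalKCat k C] (X : C) : k :=
  toScalar k (PivotalCat.dimr X)

/-- A pre-fusion category over `k`: a pivotal `k`-category in which every finite family of
objects has a direct sum, every object is a finite direct sum of simple objects, and there
are no nonzero morphisms between non-isomorphic simple objects. -/
class PreFusionCat (k : Type w) [CommRing k] (C : Type u) [Category.{v} C]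
    [Preadditive C] [CategoryTheory.Linear k C] [MonoidalCategory C]
    [MonoidalPreadditive C] [CategoryTheory.MonoidalLinear k C]
    [CategoryTheory.Limits.HasFiniteBiproducts C] [PivotalCat C] [MonoidalKCat k C] : Prop where
  semisimple : ∀ X : C, ∃ (n : ℕ) (obj : Fin n → C) (p : ∀ a, X ⟶ obj a) (q : ∀ a, obj a ⟶ X),
    (∀ a, IsSimpleObj k (obj a)) ∧ (∑ a, p a ≫ q a = 𝟙 X) ∧
    (∀ a, q a ≫ p a = 𝟙 (obj a)) ∧ (∀ a b, a ≠ b → q a ≫ p b = 0)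
  simple_hom_zero : ∀ {i j : C}, IsSimpleObj k i → IsSimpleObj k j →
    IsEmpty (i ≅ j) → ∀ f : i ⟶ j, f = 0

/-- A fusion category over `k`: a pre-fusion category with finitely many isomorphism
classes of simple objects. -/
class FusionCat (k : Type w) [CommRing k] (C : Type u) [Category.{v} C]
    [Preadditive C] [CategoryTheory.Linear k C] [MonoidalCategory C]
    [MonoidalPreadditive C] [CategoryTheory.MonoidalLinear k C]
    [CategoryTheory.Limits.HasFiniteBiproducts C] [PivotalCat C] [MonoidalKCat k C]
    [PreFusionCat k C] : Prop where
  finitely_many_simples : ∃ S : Set C, S.Finite ∧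
    ∀ i : C, IsSimpleObj k i → ∃ j ∈ S, Nonempty (i ≅ j)

/-- A representative set of simple objects: it contains the unit object, consists of simple
objects, and every simple object is isomorphic to exactly one of its elements. -/
def IsRepresentativeSet (k : Type w) [CommRing k] (C : Type u) [Category.{v} C]
    [Preadditive C] [CategoryTheory.Linear k C] [MonoidalCategory C] (I : Set C) : Prop :=
  (𝟙_ C) ∈ I ∧ (∀ i ∈ I, IsSimpleObj k i) ∧
    ∀ X : C, IsSimpleObj k X → ∃! i, i ∈ I ∧ Nonempty (X ≅ i)

/-- The dimension of a fusion category with (finite) representative set `I` of simple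
objects: `dim C = ∑_{i ∈ I} dim_l(i) · dim_r(i)`. -/
noncomputable def catDim (k : Type w) [CommRing k] {C : Type u} [Category.{v} C]
    [Preadditive C] [CategoryTheory.Linear k C] [MonoidalCategory C]
    [MonoidalPreadditive C] [CategoryTheory.MonoidalLinear k C] [PivotalCat C]
    [MonoidalKCat k C] (I : Finset C) : k :=
  ∑ i ∈ I, sdiml k i * sdimr k i

section
variable {C : Type u} [Category.{v} C] [MonoidalCategory C]

theorem auxA {Z D D' : C} (coev : 𝟙_ C ⟶ Z ⊗ D) (coev' : 𝟙_ C ⟶ Z ⊗ D') (ev' : D' ⊗ Z ⟶ 𝟙_ C)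
    (h : (λ_ Z).inv ≫ (coev' ▷ Z) ≫ (α_ Z D' Z).hom ≫ (Z ◁ ev') ≫ (ρ_ Z).hom = 𝟙 Z) :
    coev' ≫ Z ◁ ((ρ_ D').inv ≫ D' ◁ coev ≫ (α_ D' Z D).inv ≫ ev' ▷ D ≫ (λ_ D).hom) = coev := by
  calc _ = 𝟙 _ ⊗≫ (coev' ▷ 𝟙_ C ≫ (Z ⊗ D') ◁ coev) ⊗≫ Z ◁ ev' ▷ D ⊗≫ 𝟙 _ := by monoidal
    _ = 𝟙 _ ⊗≫ coev ⊗≫ ((λ_ Z).inv ≫ (coev' ▷ Z) ≫ (α_ Z D' Z).hom ≫ (Z ◁ ev') ≫ (ρ_ Z).hom) ▷ D ⊗≫ 𝟙 _ := by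
        rw [← whisker_exchange]; monoidal
    _ = coev := by rw [h]; monoidal

theorem auxB {Z D D' : C} (coev : 𝟙_ C ⟶ D ⊗ Z) (coev' : 𝟙_ C ⟶ D' ⊗ Z) (ev' : Z ⊗ D' ⟶ 𝟙_ C)
    (h : (ρ_ Z).inv ≫ (Z ◁ coev') ≫ (α_ Z D' Z).inv ≫ (ev' ▷ Z) ≫ (λ_ Z).hom = 𝟙 Z) :
    coev' ≫ ((λ_ D').inv ≫ coev ▷ D' ≫ (α_ D Z D').hom ≫ D ◁ ev' ≫ (ρ_ D).hom) ▷ Z = coev := by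
  calc _ = 𝟙 _ ⊗≫ (𝟙_ C ◁ coev' ≫ coev ▷ (D' ⊗ Z)) ⊗≫ D ◁ ev' ▷ Z ⊗≫ 𝟙 _ := by monoidal
    _ = 𝟙 _ ⊗≫ coev ⊗≫ D ◁ ((ρ_ Z).inv ≫ (Z ◁ coev') ≫ (α_ Z D' Z).inv ≫ (ev' ▷ Z) ≫ (λ_ Z).hom) ⊗≫ 𝟙 _ := by
        rw [whisker_exchange]; monoidal
    _ = coev := by rw [h]; monoidal

theorem auxC {Z D D' : C} (coev : 𝟙_ C ⟶ D ⊗ Z) (ev : Z ⊗ D ⟶ 𝟙_ C) (ev' : Z ⊗ D' ⟶ 𝟙_ C)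
    (h : (ρ_ Z).inv ≫ (Z ◁ coev) ≫ (α_ Z D Z).inv ≫ (ev ▷ Z) ≫ (λ_ Z).hom = 𝟙 Z) :
    Z ◁ ((λ_ D').inv ≫ coev ▷ D' ≫ (α_ D Z D').hom ≫ D ◁ ev' ≫ (ρ_ D).hom) ≫ ev = ev' := by
  calc _ = 𝟙 _ ⊗≫ Z ◁ coev ▷ D' ⊗≫ ((Z ⊗ D) ◁ ev' ≫ ev ▷ 𝟙_ C) ⊗≫ 𝟙 _ := by monoidal
    _ = 𝟙 _ ⊗≫ ((ρ_ Z).inv ≫ (Z ◁ coev) ≫ (α_ Z D Z).inv ≫ (ev ▷ Z) ≫ (λ_ Z).hom) ▷ D' ⊗≫ ev' ⊗≫ 𝟙 _ := by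
        rw [whisker_exchange]; monoidal
    _ = ev' := by rw [h]; monoidal

/-- nested coevaluation on `Y ⊗ X` -/
def ncoev {X X' Y Y' : C} (cX : 𝟙_ C ⟶ X ⊗ X') (cY : 𝟙_ C ⟶ Y ⊗ Y') :
    𝟙_ C ⟶ (Y ⊗ X) ⊗ (X' ⊗ Y') :=
  cY ≫ Y ◁ ((λ_ Y').inv ≫ cX ▷ Y' ≫ (α_ X X' Y').hom) ≫ (α_ Y X (X' ⊗ Y')).inv

def nev {X X' Y Y' : C} (eX : X ⊗ X' ⟶ 𝟙_ C) (eY : Y ⊗ Y' ⟶ 𝟙_ C) :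
    (Y ⊗ X) ⊗ (X' ⊗ Y') ⟶ 𝟙_ C :=
  (α_ Y X (X' ⊗ Y')).hom ≫ Y ◁ (α_ X X' Y').inv ≫ Y ◁ (eX ▷ Y') ≫ Y ◁ (λ_ Y').hom ≫ eY

theorem nest_zig1 {X X' Y Y' : C} (cX : 𝟙_ C ⟶ X ⊗ X') (cY : 𝟙_ C ⟶ Y ⊗ Y')
    (eX : X' ⊗ X ⟶ 𝟙_ C) (eY : Y' ⊗ Y ⟶ 𝟙_ C)
    (hX : (λ_ X).inv ≫ (cX ▷ X) ≫ (α_ X X' X).hom ≫ (X ◁ eX) ≫ (ρ_ X).hom = 𝟙 X)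
    (hY : (λ_ Y).inv ≫ (cY ▷ Y) ≫ (α_ Y Y' Y).hom ≫ (Y ◁ eY) ≫ (ρ_ Y).hom = 𝟙 Y) :
    (λ_ (Y ⊗ X)).inv ≫ (ncoev cX cY ▷ (Y ⊗ X)) ≫ (α_ (Y ⊗ X) (X' ⊗ Y') (Y ⊗ X)).hom ≫
      ((Y ⊗ X) ◁ nev eY eX) ≫ (ρ_ (Y ⊗ X)).hom = 𝟙 (Y ⊗ X) := by
  unfold ncoev nev
  calc _ = 𝟙 _ ⊗≫ cY ▷ (Y ⊗ X) ⊗≫ Y ◁ (cX ▷ (Y' ⊗ Y) ≫ (X ⊗ X') ◁ eY) ▷ X ⊗≫ (Y ⊗ X) ◁ eX ⊗≫ 𝟙 _ := by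
        monoidal
    _ = 𝟙 _ ⊗≫ ((λ_ Y).inv ≫ (cY ▷ Y) ≫ (α_ Y Y' Y).hom ≫ (Y ◁ eY) ≫ (ρ_ Y).hom) ▷ X ⊗≫ Y ◁ ((λ_ X).inv ≫ (cX ▷ X) ≫ (α_ X X' X).hom ≫ (X ◁ eX) ≫ (ρ_ X).hom) ⊗≫ 𝟙 _ := by
        rw [← whisker_exchange]; monoidal
    _ = _ := by rw [hX, hY]; monoidal

theorem nest_zig2 {X X' Y Y' : C} (cX : 𝟙_ C ⟶ X' ⊗ X) (cY : 𝟙_ C ⟶ Y' ⊗ Y)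
    (eX : X ⊗ X' ⟶ 𝟙_ C) (eY : Y ⊗ Y' ⟶ 𝟙_ C)
    (hX : (ρ_ X).inv ≫ (X ◁ cX) ≫ (α_ X X' X).inv ≫ (eX ▷ X) ≫ (λ_ X).hom = 𝟙 X)
    (hY : (ρ_ Y).inv ≫ (Y ◁ cY) ≫ (α_ Y Y' Y).inv ≫ (eY ▷ Y) ≫ (λ_ Y).hom = 𝟙 Y) :
    (ρ_ (Y ⊗ X)).inv ≫ ((Y ⊗ X) ◁ ncoev cY cX) ≫ (α_ (Y ⊗ X) (X' ⊗ Y') (Y ⊗ X)).inv ≫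
      (nev eX eY ▷ (Y ⊗ X)) ≫ (λ_ (Y ⊗ X)).hom = 𝟙 (Y ⊗ X) := by
  unfold ncoev nev
  calc _ = 𝟙 _ ⊗≫ (Y ⊗ X) ◁ cX ⊗≫ Y ◁ ((X ⊗ X') ◁ cY ≫ eX ▷ (Y' ⊗ Y)) ▷ X ⊗≫ eY ▷ (Y ⊗ X) ⊗≫ 𝟙 _ := by
        monoidal
    _ = 𝟙 _ ⊗≫ Y ◁ ((ρ_ X).inv ≫ (X ◁ cX) ≫ (α_ X X' X).inv ≫ (eX ▷ X) ≫ (λ_ X).hom) ⊗≫ ((ρ_ Y).inv ≫ (Y ◁ cY) ≫ (α_ Y Y' Y).inv ≫ (eY ▷ Y) ≫ (λ_ Y).hom) ▷ X ⊗≫ 𝟙 _ := by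
        rw [whisker_exchange]; monoidal
    _ = _ := by rw [hX, hY]; monoidal
end

section
open PivotalCat
variable {C : Type u} [Category.{v} C] [MonoidalCategory C] [PivotalCat C]

theorem coevl_mcon (X Y : C) :
    ncoev (coevl X) (coevl Y) ≫ (Y ⊗ X) ◁ mcon X Y = coevl (Y ⊗ X) := by
  have h := auxA (coevl (Y ⊗ X)) (ncoev (coevl X) (coevl Y)) (nev (evl Y) (evl X))
    (nest_zig1 _ _ _ _ (left_zigzag₁ X) (left_zigzag₁ Y))
  refine Eq.trans ?_ h
  congr 2
  unfold mcon nev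
  monoidal

theorem mcon_evr (X Y : C) :
    (Y ⊗ X) ◁ mcon X Y ≫ evr (Y ⊗ X) = nev (evr X) (evr Y) := by
  have h := auxC (coevr (Y ⊗ X)) (evr (Y ⊗ X)) (nev (evr X) (evr Y)) (right_zigzag₁ _)
  refine Eq.trans ?_ h
  congr 2
  exact constraint_eq X Y

theorem coevr_mcon (X Y : C) :
    ncoev (coevr Y) (coevr X) ≫ mcon X Y ▷ (Y ⊗ X) = coevr (Y ⊗ X) := by
  have h := auxB (coevr (Y ⊗ X)) (ncoev (coevr Y) (coevr X)) (nev (evr X) (evr Y))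
    (nest_zig2 _ _ _ _ (right_zigzag₁ X) (right_zigzag₁ Y))
  refine Eq.trans ?_ h
  congr 2
  exact constraint_eq X Y

theorem coevl_pdual {X Y : C} (f : X ⟶ Y) :
    coevl Y ≫ Y ◁ pdual f = coevl X ≫ f ▷ dual X := by
  have h := auxA (coevl X ≫ f ▷ dual X) (coevl Y) (evl Y) (left_zigzag₁ Y)
  refine Eq.trans ?_ h
  congr 2
  unfold pdual
  simp only [MonoidalCategory.whiskerLeft_comp, Category.assoc]

theorem pdual_evr {X Y : C} (f : X ⟶ Y) :
    X ◁ pdual f ≫ evr X = f ▷ dual Y ≫ evr Y := by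
  have h := auxC (coevr X) (evr X) (f ▷ dual Y ≫ evr Y) (right_zigzag₁ X)
  refine Eq.trans ?_ h
  congr 2
  unfold pdual
  rw [ldual_eq_rdual]
  monoidal

theorem trr_comm {X Y : C} (f : X ⟶ Y) (g : Y ⟶ X) : trr (f ≫ g) = trr (g ≫ f) := by
  unfold trr
  rw [comp_whiskerRight, comp_whiskerRight, Category.assoc, Category.assoc, ← pdual_evr f,
    ← Category.assoc, ← coevl_pdual f, Category.assoc, whisker_exchange_assoc]

theorem dimr_iso {X Y : C} (e : X ≅ Y) : dimr X = dimr Y := by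
  unfold dimr
  rw [← e.hom_inv_id, ← e.inv_hom_id, trr_comm]

theorem dimr_eq (X : C) : dimr X = coevl X ≫ evr X := by simp [dimr, trr]
theorem diml_eq (X : C) : diml X = coevr X ≫ evl X := by simp [diml, trl]

theorem dimr_tensor (X Y : C) : dimr (Y ⊗ X) =
    coevl Y ≫ Y ◁ ((λ_ _).inv ≫ dimr X ▷ dual Y ≫ (λ_ _).hom) ≫ evr Y := by
  rw [dimr_eq, ← coevl_mcon, Category.assoc, mcon_evr, dimr_eq]
  unfold ncoev nev
  monoidal

theorem pivot_key (X : C) :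
    coevl (dual X ⊗ X) ≫ (evl X ▷ _) ≫ (λ_ _).hom =
      coevr (dual X ⊗ X) ≫ (_ ◁ evl X) ≫ (ρ_ _).hom := by
  have h := ldual_eq_rdual (evl X)
  have h1 : (ρ_ (dual (𝟙_ C))).inv ≫ (dual (𝟙_ C) ◁ coevl (dual X ⊗ X)) ≫
      (dual (𝟙_ C) ◁ (evl X ▷ dual (dual X ⊗ X))) ≫
      (α_ (dual (𝟙_ C)) (𝟙_ C) (dual (dual X ⊗ X))).inv ≫ (evl (𝟙_ C) ▷ dual (dual X ⊗ X)) ≫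
        (λ_ (dual (dual X ⊗ X))).hom =
      ((ρ_ (dual (𝟙_ C))).inv ≫ evl (𝟙_ C)) ≫
        coevl (dual X ⊗ X) ≫ (evl X ▷ _) ≫ (λ_ _).hom := by
    calc _ = 𝟙 _ ⊗≫ (dual (𝟙_ C) ◁ (coevl (dual X ⊗ X) ≫ (evl X ▷ _) ≫ (λ_ _).hom) ≫ 
          ((ρ_ (dual (𝟙_ C))).inv ≫ evl (𝟙_ C)) ▷ dual (dual X ⊗ X)) ⊗≫ 𝟙 _ := by monoidal
      _ = _ := by rw [whisker_exchange]; monoidal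
  have h2 : (λ_ (dual (𝟙_ C))).inv ≫ (coevr (dual X ⊗ X) ▷ dual (𝟙_ C)) ≫
      ((dual (dual X ⊗ X) ◁ evl X) ▷ dual (𝟙_ C)) ≫
      (α_ (dual (dual X ⊗ X)) (𝟙_ C) (dual (𝟙_ C))).hom ≫ (dual (dual X ⊗ X) ◁ evr (𝟙_ C)) ≫
        (ρ_ (dual (dual X ⊗ X))).hom =
      ((λ_ (dual (𝟙_ C))).inv ≫ evr (𝟙_ C)) ≫
        coevr (dual X ⊗ X) ≫ (_ ◁ evl X) ≫ (ρ_ _).hom := by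
    calc _ = 𝟙 _ ⊗≫ ((coevr (dual X ⊗ X) ≫ (_ ◁ evl X) ≫ (ρ_ _).hom) ▷ dual (𝟙_ C) ≫ 
          dual (dual X ⊗ X) ◁ ((λ_ (dual (𝟙_ C))).inv ≫ evr (𝟙_ C))) ⊗≫ 𝟙 _ := by monoidal
      _ = _ := by rw [← whisker_exchange]; monoidal
  rw [h1, h2, ← ev_unit] at h
  have h3 : (coevl (𝟙_ C) ≫ (λ_ _).hom) ≫ ((ρ_ (dual (𝟙_ C))).inv ≫ evl (𝟙_ C)) = 𝟙 _ := by
    rw [← left_zigzag₁ (𝟙_ C)]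
    monoidal
  have h4 := congrArg (fun t => (coevl (𝟙_ C) ≫ (λ_ _).hom) ≫ t) h
  rw [← Category.assoc, h3, ← Category.assoc (coevl (𝟙_ C) ≫ (λ_ _).hom), h3] at h4
  simpa using h4

/-- `u ↦ (coevr ⊗ u) ≫ nested evr` recovers `u ≫ evr`. -/
theorem test_evr (X : C) (u : 𝟙_ C ⟶ dual X ⊗ dual (dual X)) :
    u ≫ evr (dual X) = coevr X ≫ (ρ_ _).inv ≫ (dual X ⊗ X) ◁ (u ≫ mcon X (dual X)) ≫
      evr (dual X ⊗ X) := by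
  rw [MonoidalCategory.whiskerLeft_comp, Category.assoc, mcon_evr]
  unfold nev
  symm
  calc _ = 𝟙 _ ⊗≫ (coevr X ▷ 𝟙_ C ≫ (dual X ⊗ X) ◁ u) ⊗≫ dual X ◁ evr X ▷ dual (dual X) ⊗≫
        evr (dual X) := by monoidal
    _ = 𝟙 _ ⊗≫ u ⊗≫ ((λ_ (dual X)).inv ≫ (coevr X ▷ dual X) ≫ (α_ (dual X) X (dual X)).hom ≫
      (dual X ◁ evr X) ≫ (ρ_ (dual X)).hom) ▷ dual (dual X) ⊗≫ evr (dual X) := by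
        rw [← whisker_exchange]; monoidal
    _ = _ := by rw [right_zigzag₂]; monoidal

theorem dimr_dual (X : C) : dimr (dual X) = diml X := by
  have h := pivot_key X
  have hl : coevl (dual X ⊗ X) ≫ (evl X ▷ _) ≫ (λ_ _).hom =
      coevl (dual X) ≫ mcon X (dual X) := by
    rw [← coevl_mcon]
    unfold ncoev
    calc _ = 𝟙 _ ⊗≫ coevl (dual X) ⊗≫ dual X ◁ coevl X ▷ dual (dual X) ⊗≫ 
          ((dual X ⊗ X) ◁ mcon X (dual X) ≫ evl X ▷ _) ⊗≫ 𝟙 _ := by monoidal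
      _ = 𝟙 _ ⊗≫ coevl (dual X) ⊗≫ ((ρ_ (dual X)).inv ≫ (dual X ◁ coevl X) ≫
            (α_ (dual X) X (dual X)).inv ≫
            (evl X ▷ dual X) ≫ (λ_ (dual X)).hom) ▷ dual (dual X) ⊗≫ mcon X (dual X) := by
          rw [whisker_exchange]; monoidal
      _ = _ := by rw [left_zigzag₂]; monoidal
  have hr : coevr (dual X ⊗ X) ≫ (_ ◁ evl X) ≫ (ρ_ _).hom =
      (coevr X ≫ dual X ◁ ((λ_ X).inv ≫ coevr (dual X) ▷ X ≫ (α_ _ _ _).hom ≫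
        dual (dual X) ◁ evl X ≫ (ρ_ _).hom)) ≫ mcon X (dual X) := by
    rw [← coevr_mcon]
    unfold ncoev
    calc _ = 𝟙 _ ⊗≫ coevr X ⊗≫ dual X ◁ coevr (dual X) ▷ X ⊗≫ 
          (mcon X (dual X) ▷ (dual X ⊗ X) ≫ _ ◁ evl X) ⊗≫ 𝟙 _ := by monoidal
      _ = _ := by rw [← whisker_exchange]; monoidal
  rw [hl, hr] at h
  rw [dimr_eq, test_evr, h, ← test_evr, diml_eq, Category.assoc,
    auxC (coevr (dual X)) (evr (dual X)) (evl X) (right_zigzag₁ (dual X))]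
end

section
open PivotalCat
variable (k : Type w) [CommRing k] {C : Type u}
    [Category.{v} C] [Preadditive C] [CategoryTheory.Linear k C] [MonoidalCategory C]
    [MonoidalPreadditive C] [CategoryTheory.MonoidalLinear k C]

theorem toScalar_spec [MonoidalKCat k C] (f : 𝟙_ C ⟶ 𝟙_ C) : toScalar k f • 𝟙 (𝟙_ C) = f :=
  (Equiv.ofBijective (fun a : k => a • 𝟙 (𝟙_ C))
    (MonoidalKCat.unit_free (k := k) (C := C))).apply_symm_apply f

theorem toScalar_eq [MonoidalKCat k C] (f : 𝟙_ C ⟶ 𝟙_ C) (r : k) (h : f = r • 𝟙 (𝟙_ C)) :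
    toScalar k f = r :=
  (MonoidalKCat.unit_free (k := k) (C := C)).1 ((toScalar_spec k f).trans h)

theorem toScalar_sum [MonoidalKCat k C] {n : ℕ} (f : Fin n → (𝟙_ C ⟶ 𝟙_ C)) :
    toScalar k (∑ i, f i) = ∑ i, toScalar k (f i) := by
  apply toScalar_eq
  rw [Finset.sum_smul]
  simp only [toScalar_spec]

variable [PivotalCat C]

theorem sdimr_tensor [MonoidalKCat k C] (X Y : C) :
    sdimr k (Y ⊗ X) = sdimr k Y * sdimr k X := by
  apply toScalar_eq
  rw [dimr_tensor, mul_comm, mul_smul]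
  unfold sdimr
  rw [toScalar_spec k (dimr Y)]
  conv_lhs => rw [← toScalar_spec k (dimr X)]
  simp [dimr_eq, MonoidalLinear.smul_whiskerRight, MonoidalLinear.whiskerLeft_smul]

/-- adjunction iso -/
noncomputable def homDual (Z b : C) : ((Z ⊗ b) ⟶ 𝟙_ C) ≃ₗ[k] (b ⟶ dual Z) :=
  letI : ExactPairing (dual Z) Z :=
    { coevaluation' := coevr Z
      evaluation' := evr Z
      coevaluation_evaluation' := by
        have := right_zigzag₁ Z
        rw [Iso.inv_comp_eq] at this
        simp only [← Category.assoc] at this ⊢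
        rw [← Iso.eq_comp_inv] at this
        simpa using this
      evaluation_coevaluation' := by
        have := right_zigzag₂ Z
        rw [Iso.inv_comp_eq] at this
        simp only [← Category.assoc] at this ⊢
        rw [← Iso.eq_comp_inv] at this
        simpa using this }
  LinearEquiv.trans
    { tensorLeftHomEquiv b (dual Z) Z (𝟙_ C) with
      map_add' := fun f g => by simp [tensorLeftHomEquiv]
      map_smul' := fun r f => by simp [tensorLeftHomEquiv] }
    (Linear.homCongr k (Iso.refl b) (ρ_ (dual Z)))

theorem finrank_simple_hom [Nontrivial k] [HasFiniteBiproducts C] [MonoidalKCat k C]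
    [PreFusionCat k C] {i j : C}
    (hi : IsSimpleObj k i) (hj : IsSimpleObj k j) [Decidable (Nonempty (i ≅ j))] :
    Module.finrank k (i ⟶ j) = (if Nonempty (i ≅ j) then 1 else 0) ∧
      Module.Free k (i ⟶ j) ∧ Module.Finite k (i ⟶ j) := by
  split_ifs with h
  · obtain ⟨e⟩ := h
    let L : k ≃ₗ[k] (i ⟶ i) := LinearEquiv.ofBijective
      (LinearMap.toSpanSingleton k (i ⟶ i) (𝟙 i)) hi
    let M : k ≃ₗ[k] (i ⟶ j) := L.trans (Linear.homCongr k (Iso.refl i) e)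
    exact ⟨by rw [← M.finrank_eq, Module.finrank_self], Module.Free.of_equiv M,
      Module.Finite.equiv M⟩
  · have : Subsingleton (i ⟶ j) := ⟨fun f g => by
      rw [PreFusionCat.simple_hom_zero hi hj (not_nonempty_iff.1 h) f,
        PreFusionCat.simple_hom_zero hi hj (not_nonempty_iff.1 h) g]⟩
    exact ⟨Module.finrank_zero_of_subsingleton, inferInstance, inferInstance⟩

theorem sum_mult [Nontrivial k] [HasFiniteBiproducts C] [MonoidalKCat k C]
    [PreFusionCat k C] (I : Finset C) (hI : IsRepresentativeSet k C ↑I) (W : C) :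
    ∑ b ∈ I, sdimr k b * (Module.finrank k (b ⟶ W) : k) = sdimr k W := by
  classical
  obtain ⟨n, obj, p, q, hs, hsum, hqp, hz⟩ := PreFusionCat.semisimple (k := k) W
  have hdim : sdimr k W = ∑ a, sdimr k (obj a) := by
    unfold sdimr
    rw [← toScalar_sum]
    congr 1
    unfold dimr
    rw [← hsum]
    have : ∀ a, trr (𝟙 (obj a)) = trr (p a ≫ q a) := fun a => by rw [trr_comm, hqp]
    simp only [this]
    simp [trr, sum_whiskerRight, Preadditive.comp_sum, Preadditive.sum_comp]
  have hrank : ∀ b ∈ I, Module.finrank k (b ⟶ W) =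
      ∑ a, if Nonempty (b ≅ obj a) then 1 else 0 := by
    intro b hb
    have hb' := hI.2.1 b hb
    have := fun a => (finrank_simple_hom k hb' (hs a)).2.1
    have := fun a => (finrank_simple_hom k hb' (hs a)).2.2
    let L : (b ⟶ W) ≃ₗ[k] (∀ a, b ⟶ obj a) :=
      { toFun := fun f a => f ≫ p a
        invFun := fun g => ∑ a, g a ≫ q a
        map_add' := fun f g => by ext; simp
        map_smul' := fun r f => by ext; simp
        left_inv := fun f => by
          simp only [Category.assoc]
          rw [← Preadditive.comp_sum, hsum, Category.comp_id]
        right_inv := fun g => by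
          ext a
          simp only [Preadditive.sum_comp, Category.assoc]
          rw [Finset.sum_eq_single a]
          · rw [hqp, Category.comp_id]
          · intro c _ hc
            rw [hz c a hc, comp_zero]
          · simp }
    rw [L.finrank_eq, Module.finrank_pi_fintype]
    exact Finset.sum_congr rfl fun a _ => (finrank_simple_hom k hb' (hs a)).1
  rw [hdim, Finset.sum_congr rfl fun b hb => by rw [hrank b hb]]
  simp only [Nat.cast_sum, Finset.mul_sum]
  rw [Finset.sum_comm]
  refine Finset.sum_congr rfl fun a _ => ?_
  obtain ⟨i, ⟨hi, ⟨e⟩⟩, huniq⟩ := hI.2.2 (obj a) (hs a)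
  rw [Finset.sum_eq_single i]
  · rw [if_pos ⟨e.symm⟩, Nat.cast_one, mul_one]
    unfold sdimr
    rw [dimr_iso e]
  · intro b hb hbi
    rw [if_neg, Nat.cast_zero, mul_zero]
    rintro ⟨e'⟩
    exact hbi (huniq b ⟨hb, ⟨e'.symm⟩⟩)
  · intro h; exact absurd hi h

end

/-- Bubble identity (Lemma 4.3, formula (4.1)): in a spherical fusion category over `k`
with representative set `I` of simple objects, for all objects `X, Y`:
`∑_{a,b ∈ I} dim(a)·dim(b)·N^𝟙_{X⊗a⊗Y⊗b} = dim(X)·dim(Y)·dim(C)` in `k`, where the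
multiplicity `N^𝟙_Z = rank_k Hom(Z, 𝟙)` is regarded in `k` via `ℤ → k`. -/
theorem spherical_fusion_bubble_identity (k : Type w) [CommRing k] (C : Type u)
    [Category.{v} C] [Preadditive C] [CategoryTheory.Linear k C] [MonoidalCategory C]
    [MonoidalPreadditive C] [CategoryTheory.MonoidalLinear k C]
    [CategoryTheory.Limits.HasFiniteBiproducts C] [PivotalCat C] [MonoidalKCat k C]
    [PreFusionCat k C] [FusionCat k C] [SphericalCat C]
    (I : Finset C) (hI : IsRepresentativeSet k C ↑I) (X Y : C) :
    ∑ a ∈ I, ∑ b ∈ I, sdiml k a * sdiml k b *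
        (Module.finrank k ((X ⊗ a ⊗ Y ⊗ b) ⟶ 𝟙_ C) : k) =
      sdiml k X * sdiml k Y * catDim k I := by
  rcases subsingleton_or_nontrivial k with hk | hk
  · exact Subsingleton.elim _ _
  have hlr : ∀ Z : C, sdiml k Z = sdimr k Z := fun Z => by
    unfold sdiml sdimr PivotalCat.diml PivotalCat.dimr
    rw [SphericalCat.tr_eq]
  have hd : ∀ Z : C, sdimr k (PivotalCat.dual Z) = sdimr k Z := fun Z => by
    rw [← hlr Z]
    unfold sdiml sdimr
    rw [dimr_dual]
  have hN : ∀ a b : C, Module.finrank k ((X ⊗ a ⊗ Y ⊗ b) ⟶ 𝟙_ C) =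
      Module.finrank k (b ⟶ PivotalCat.dual (X ⊗ a ⊗ Y)) := fun a b => by
    rw [← (homDual k (X ⊗ a ⊗ Y) b).finrank_eq]
    refine (Linear.homCongr k (?_ : (X ⊗ a ⊗ Y ⊗ b) ≅ (X ⊗ a ⊗ Y) ⊗ b) (Iso.refl _)).finrank_eq
    exact whiskerLeftIso X (α_ a Y b).symm ≪≫ (α_ X (a ⊗ Y) b).symm
  simp only [hlr, hN, catDim, mul_assoc, ← Finset.mul_sum]
  simp only [sum_mult k I hI, hd, sdimr_tensor, Finset.mul_sum]
  refine Finset.sum_congr rfl fun a _ => ?_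
  ring
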